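/- arXiv:2312.03939 — 5 statements merged into one kernel-verified Lean document; each statement's English description precedes it below -/
import Mathlib

section
/- Let n ≥ 1 and r = n − 1. In the polynomial ring ℚ[X, Y, z₁, …, z_{n−1}], for every integer p with 0 ≤ p ≤ n + 1 one has e_p(X, X+Y, X+z₁, …, X+z_{n−1}) = Σ_{i=0}^{p} C(n+1−i, p−i) · ( X^{p−i} e_i(z₁,…,z_{n−1}) + X^{p−i} Y e_{i−1}(z₁,…,z_{n−1}) ), where e_j denotes the elementary symmetric polynomial of degree j (with the conventions e_{−1} = 0 and e_j(z₁,…,z_{n−1}) = 0 for j ≥ n). Here the left-hand side is the elementary symmetric polynomial of degree p in the n + 1 listed elements. -/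
open MvPolynomial Finset

theorem esymm_cons_zero' {R : Type*} [CommRing R] (a : R) (s : Multiset R) :
    (a ::ₘ s).esymm 0 = s.esymm 0 := by
  simp [Multiset.esymm]

theorem esymm_cons_succ' {R : Type*} [CommRing R] (a : R) (s : Multiset R) (k : ℕ) :
    (a ::ₘ s).esymm (k + 1) = s.esymm (k + 1) + a * s.esymm k := by
  simp [Multiset.esymm, Multiset.powersetCard_cons, Multiset.sum_map_mul_left]

theorem esymm_shift {R : Type*} [CommRing R] (x : R) (s : Multiset R) (p : ℕ)
    (hp : p ≤ Multiset.card s) :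
    (s.map (fun a => x + a)).esymm p =
      ∑ i ∈ Finset.range (p + 1),
        (Nat.choose (Multiset.card s - i) (p - i) : R) * (x ^ (p - i) * s.esymm i) := by
  have h1 := Multiset.prod_X_add_C_coeff (s.map (fun a => x + a))
    (k := Multiset.card s - p) (by simp)
  rw [Multiset.card_map, Nat.sub_sub_self hp] at h1
  rw [← h1]
  have h2 : ((s.map (fun a => x + a)).map (fun r => Polynomial.X + Polynomial.C r)).prod
      = (s.map (fun r => Polynomial.X + Polynomial.C r)).prod.comp
        (Polynomial.X + Polynomial.C x) := by
    rw [Polynomial.multiset_prod_comp, Multiset.map_map, Multiset.map_map]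
    congr 1
    apply Multiset.map_congr rfl
    intro a _
    simp [add_assoc]
  rw [h2, Multiset.prod_X_add_C_eq_sum_esymm, Polynomial.sum_comp,
    Polynomial.finset_sum_coeff]
  symm
  apply Finset.sum_subset_zero_on_sdiff
  · intro i hi
    simp only [Finset.mem_range] at *
    omega
  · intro i hi
    simp only [Finset.mem_sdiff, Finset.mem_range] at hi
    simp only [Polynomial.mul_comp, Polynomial.C_comp, Polynomial.pow_comp, Polynomial.X_comp,
      Polynomial.coeff_C_mul, Polynomial.coeff_X_add_C_pow]
    rw [Nat.choose_eq_zero_of_lt (by omega)]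
    simp
  · intro i hi
    simp only [Finset.mem_range] at hi
    simp only [Polynomial.mul_comp, Polynomial.C_comp, Polynomial.pow_comp, Polynomial.X_comp,
      Polynomial.coeff_C_mul, Polynomial.coeff_X_add_C_pow]
    rw [← Nat.choose_symm (n := Multiset.card s - i) (k := p - i) (by omega),
      show Multiset.card s - i - (p - i) = Multiset.card s - p by omega,
      show Multiset.card s - i - (Multiset.card s - p) = p - i by omega]
    ring

/-- Splitting-principle form of the Lemma computing `h(c_p)`:
`e_p(X, X+Y, X+z₁, …, X+z_{n-1})
  = ∑_{i=0}^{p} C(n+1-i, p-i) (X^{p-i} e_i(z) + X^{p-i} Y e_{i-1}(z))`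
in `ℚ[X, Y, z₁, …, z_{n-1}]`, realized as `MvPolynomial (Fin (n+1)) ℚ` with
`X = X 0`, `Y = X 1`, `z_i = X (i+1)` for `i = 1, …, n-1`. -/
theorem stmt0 (n : ℕ) (hn : 1 ≤ n) (p : ℕ) (hp : p ≤ n + 1)
    (E : ℕ → MvPolynomial (Fin (n + 1)) ℚ)
    (hE : ∀ j, E j =
      (((Finset.univ.filter (fun i : Fin (n + 1) => 2 ≤ i.val)).val.map
        (fun i => X i)).esymm j)) :
    ((Finset.univ.val.map (fun i : Fin (n + 1) =>
        if i.val = 0 then X 0 else X 0 + X i)).esymm p) =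
      ∑ i ∈ Finset.range (p + 1),
        (Nat.choose (n + 1 - i) (p - i) : MvPolynomial (Fin (n + 1)) ℚ) *
          (X 0 ^ (p - i) * E i +
            X 0 ^ (p - i) * X 1 * (if i = 0 then 0 else E (i - 1))) := by
  obtain ⟨m, rfl⟩ : ∃ m, n = m + 1 := ⟨n - 1, by omega⟩
  set F := Finset.univ.filter (fun i : Fin (m + 1 + 1) => 2 ≤ i.val) with hF
  have h1 : (1 : Fin (m + 1 + 1)) ∉ F := by simp [hF]
  have h0 : (0 : Fin (m + 1 + 1)) ∉ insert 1 F := by simp [hF]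
  have hu : (Finset.univ : Finset (Fin (m + 1 + 1))) = insert 0 (insert 1 F) := by
    ext i
    simp only [hF, Finset.mem_univ, Finset.mem_insert, Finset.mem_filter, true_and, true_iff,
      Fin.ext_iff, Fin.val_zero, Fin.val_one]
    omega
  have huv : (Finset.univ : Finset (Fin (m + 1 + 1))).val = 0 ::ₘ 1 ::ₘ F.val := by
    rw [hu, Finset.insert_val_of_notMem h0, Finset.insert_val_of_notMem h1]
  set Z : Multiset (MvPolynomial (Fin (m + 1 + 1)) ℚ) := F.val.map (fun i => X i) with hZ
  have hm : (Finset.univ.val.map (fun i : Fin (m + 1 + 1) =>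
        if i.val = 0 then X 0 else X 0 + X i) : Multiset (MvPolynomial (Fin (m + 1 + 1)) ℚ)) =
      (0 ::ₘ X 1 ::ₘ Z).map (fun a => X 0 + a) := by
    rw [huv, hZ]
    simp only [Multiset.map_cons, Multiset.map_map]
    congr 1
    · simp
    congr 1
    apply Multiset.map_congr rfl
    intro i hi
    have : 2 ≤ i.val := by simpa [hF] using hi
    rw [if_neg (by omega)]
    rfl
  have hc : Multiset.card (0 ::ₘ X 1 ::ₘ Z) = m + 1 + 1 := by
    have := congrArg Multiset.card hm
    simpa using this.symm
  rw [hm, esymm_shift _ _ _ (by rw [hc]; exact hp), hc]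
  apply Finset.sum_congr rfl
  intro i _
  congr 1
  rcases i with _ | i
  · simp [esymm_cons_zero', hE]
  · simp only [esymm_cons_succ', hE, Nat.add_sub_cancel, if_neg (Nat.succ_ne_zero i)]
    ring
end

section
/- Fix an integer n ≥ 1 and work in ℚ[X, Y]. For p ≥ 0 set B_p = (−1)^p · Σ_{j=0}^{p} C(n+1, j) X^j Y^{p−j}, and set B_{−1} = 0. Then for every integer p with 1 ≤ p ≤ n − 1 one has Σ_{i=0}^{p} C(n+1−i, p−i) · ( X^{p−i} B_i + X^{p−i} Y B_{i−1} ) = 0. -/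
open MvPolynomial Finset

/-- The closed forms `B_p = (-1)^p ∑_{j=0}^{p} C(n+1,j) X^j Y^{p-j}` solve the
elimination equations `∑_{i=0}^{p} C(n+1-i, p-i) (X^{p-i} B_i + X^{p-i} Y B_{i-1}) = 0`
for `1 ≤ p ≤ n-1`, in `ℚ[X, Y] = MvPolynomial (Fin 2) ℚ` with `X = X 0`, `Y = X 1`
(and the convention `B_{-1} = 0`). -/
theorem stmt2 (n : ℕ) (hn : 1 ≤ n)
    (B : ℕ → MvPolynomial (Fin 2) ℚ)
    (hB : ∀ m, B m = (-1) ^ m *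
      ∑ j ∈ Finset.range (m + 1),
        (Nat.choose (n + 1) j : MvPolynomial (Fin 2) ℚ) * X 0 ^ j * X 1 ^ (m - j))
    (p : ℕ) (hp1 : 1 ≤ p) (hp2 : p ≤ n - 1) :
    ∑ i ∈ Finset.range (p + 1),
      (Nat.choose (n + 1 - i) (p - i) : MvPolynomial (Fin 2) ℚ) *
        (X 0 ^ (p - i) * B i +
          X 0 ^ (p - i) * X 1 * (if i = 0 then 0 else B (i - 1))) = 0 := by
  have key : ∀ i, B i + X 1 * (if i = 0 then 0 else B (i - 1)) =
      (-1) ^ i * (Nat.choose (n + 1) i : MvPolynomial (Fin 2) ℚ) * X 0 ^ i := by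
    intro i
    rcases i with _ | m
    · simp [hB]
    · rw [if_neg (Nat.succ_ne_zero m), Nat.add_sub_cancel, hB (m + 1), hB m,
        Finset.sum_range_succ]
      have h : ∑ j ∈ Finset.range (m + 1),
          (Nat.choose (n + 1) j : MvPolynomial (Fin 2) ℚ) * X 0 ^ j * X 1 ^ (m + 1 - j) =
          X 1 * ∑ j ∈ Finset.range (m + 1),
          (Nat.choose (n + 1) j : MvPolynomial (Fin 2) ℚ) * X 0 ^ j * X 1 ^ (m - j) := by
        rw [Finset.mul_sum]
        refine Finset.sum_congr rfl fun j hj => ?_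
        have hj' : m + 1 - j = (m - j) + 1 := by
          have := Finset.mem_range.mp hj
          omega
        rw [hj', pow_succ]
        ring
      rw [h, Nat.sub_self]
      ring
  have alt : ∑ i ∈ Finset.range (p + 1),
      ((-1) ^ i * (Nat.choose p i : MvPolynomial (Fin 2) ℚ)) = 0 := by
    have h := Int.alternating_sum_range_choose_of_ne (n := p) (by omega)
    have h2 := congrArg (Int.cast : ℤ → MvPolynomial (Fin 2) ℚ) h
    push_cast at h2
    exact h2
  have main : ∀ i ∈ Finset.range (p + 1),
      (Nat.choose (n + 1 - i) (p - i) : MvPolynomial (Fin 2) ℚ) *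
        (X 0 ^ (p - i) * B i +
          X 0 ^ (p - i) * X 1 * (if i = 0 then 0 else B (i - 1))) =
      (Nat.choose (n + 1) p : MvPolynomial (Fin 2) ℚ) * X 0 ^ p *
        ((-1) ^ i * (Nat.choose p i : MvPolynomial (Fin 2) ℚ)) := by
    intro i hi
    have hip : i ≤ p := by
      have := Finset.mem_range.mp hi
      omega
    have hc : (Nat.choose (n + 1) p : MvPolynomial (Fin 2) ℚ) * (Nat.choose p i) =
        (Nat.choose (n + 1) i) * (Nat.choose (n + 1 - i) (p - i)) := by
      have := Nat.choose_mul (n := n + 1) (k := p) (s := i) (by omega) 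
      exact_mod_cast this
    have hx : (X 0 : MvPolynomial (Fin 2) ℚ) ^ p = X 0 ^ (p - i) * X 0 ^ i := by
      rw [← pow_add, Nat.sub_add_cancel hip]
    rw [mul_assoc (X 0 ^ (p - i)), ← mul_add, key i, hx]
    linear_combination (-(X 0 ^ (p - i) * X 0 ^ i * (-1) ^ i)) * hc
  rw [Finset.sum_congr rfl main, ← Finset.mul_sum, alt, mul_zero]
end

section
/- Fix an integer n ≥ 1 and work in ℚ[X, Y]. For 0 ≤ p ≤ n − 1 set B_p = (−1)^p · Σ_{j=0}^{p} C(n+1, j) X^j Y^{p−j}, and set B_p = 0 for p ≥ n as well as B_{−1} = 0. Then Σ_{i=0}^{n} C(n+1−i, n−i) · ( X^{n−i} B_i + X^{n−i} Y B_{i−1} ) = (−1)^{n+1} · Σ_{j=0}^{n} C(n+1, j) X^j Y^{n−j}. -/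
open MvPolynomial Finset

/-- The differential `∂(s⁻¹c_n)` in the minimal Sullivan model of `Gr₁^ℂ(TℂPⁿ)`:
with `B_p = (-1)^p ∑_{j=0}^{p} C(n+1,j) X^j Y^{p-j}` for `0 ≤ p ≤ n-1`, `B_p = 0` for
`p ≥ n` and `B_{-1} = 0`, one has
`∑_{i=0}^{n} C(n+1-i, n-i) (X^{n-i} B_i + X^{n-i} Y B_{i-1})
  = (-1)^{n+1} ∑_{j=0}^{n} C(n+1,j) X^j Y^{n-j}`
in `ℚ[X, Y] = MvPolynomial (Fin 2) ℚ` with `X = X 0`, `Y = X 1`. -/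
theorem stmt3 (n : ℕ) (hn : 1 ≤ n)
    (B : ℕ → MvPolynomial (Fin 2) ℚ)
    (hB : ∀ m, B m = if m < n then (-1) ^ m *
      ∑ j ∈ Finset.range (m + 1),
        (Nat.choose (n + 1) j : MvPolynomial (Fin 2) ℚ) * X 0 ^ j * X 1 ^ (m - j)
      else 0) :
    ∑ i ∈ Finset.range (n + 1),
      (Nat.choose (n + 1 - i) (n - i) : MvPolynomial (Fin 2) ℚ) *
        (X 0 ^ (n - i) * B i +
          X 0 ^ (n - i) * X 1 * (if i = 0 then 0 else B (i - 1))) =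
    (-1) ^ (n + 1) *
      ∑ j ∈ Finset.range (n + 1),
        (Nat.choose (n + 1) j : MvPolynomial (Fin 2) ℚ) * X 0 ^ j * X 1 ^ (n - j) := by
  set A : ℕ → MvPolynomial (Fin 2) ℚ := fun m => (-1) ^ m *
      ∑ j ∈ Finset.range (m + 1),
        (Nat.choose (n + 1) j : MvPolynomial (Fin 2) ℚ) * X 0 ^ j * X 1 ^ (m - j) with hA
  have hBA : ∀ m, m < n → B m = A m := fun m hm => by rw [hB, if_pos hm]
  have hBn : B n = 0 := by rw [hB, if_neg (lt_irrefl n)]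
  have hrec : ∀ m, A (m + 1) + X 1 * A m =
      (-1) ^ (m + 1) * ((Nat.choose (n + 1) (m + 1) : MvPolynomial (Fin 2) ℚ) * X 0 ^ (m + 1)) := by
    intro m
    have h1 : ∑ j ∈ Finset.range (m + 1),
        (Nat.choose (n + 1) j : MvPolynomial (Fin 2) ℚ) * X 0 ^ j * X 1 ^ (m + 1 - j) =
        X 1 * ∑ j ∈ Finset.range (m + 1),
        (Nat.choose (n + 1) j : MvPolynomial (Fin 2) ℚ) * X 0 ^ j * X 1 ^ (m - j) := by
      rw [Finset.mul_sum]
      refine Finset.sum_congr rfl fun j hj => ?_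
      have hj' : j ≤ m := Nat.lt_succ_iff.mp (Finset.mem_range.mp hj)
      rw [Nat.succ_sub hj', pow_succ]
      ring
    simp only [hA]
    rw [Finset.sum_range_succ _ (m + 1), h1, Nat.sub_self, pow_zero]
    ring
  have hterm : ∀ i ∈ Finset.range (n + 1),
      (Nat.choose (n + 1 - i) (n - i) : MvPolynomial (Fin 2) ℚ) *
        (X 0 ^ (n - i) * B i +
          X 0 ^ (n - i) * X 1 * (if i = 0 then 0 else B (i - 1))) =
      X 0 ^ n * ((n : MvPolynomial (Fin 2) ℚ) + 1) *
        ((-1) ^ i * (Nat.choose n i : MvPolynomial (Fin 2) ℚ)) -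
        (if i = n then A n else 0) := by
    intro i hi
    have hi' : i ≤ n := Nat.lt_succ_iff.mp (Finset.mem_range.mp hi)
    have hc : Nat.choose (n + 1 - i) (n - i) = n + 1 - i := by
      rw [Nat.succ_sub hi']
      exact Nat.choose_succ_self_right _
    have hch : (Nat.choose n i : MvPolynomial (Fin 2) ℚ) * (n + 1) =
        (Nat.choose (n + 1) i : MvPolynomial (Fin 2) ℚ) * ((n + 1 - i : ℕ) : MvPolynomial (Fin 2) ℚ) := by
      exact_mod_cast congrArg (Nat.cast (R := MvPolynomial (Fin 2) ℚ)) (Nat.choose_mul_succ_eq n i)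
    have hX : (X 0 : MvPolynomial (Fin 2) ℚ) ^ n = X 0 ^ (n - i) * X 0 ^ i := by
      rw [← pow_add, Nat.sub_add_cancel hi']
    have hBi : B i = A i - (if i = n then A n else 0) := by
      split_ifs with h
      · rw [h, hBn, sub_self]
      · rw [hBA i (by omega), sub_zero]
    have hs : A i + X 1 * (if i = 0 then 0 else B (i - 1)) =
        (-1) ^ i * ((Nat.choose (n + 1) i : MvPolynomial (Fin 2) ℚ) * X 0 ^ i) := by
      rcases i with _ | k
      · simp [hA]
      · rw [if_neg (Nat.succ_ne_zero k), Nat.add_sub_cancel, hBA k (by omega), hrec]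
    have hd : ((n + 1 - i : ℕ) : MvPolynomial (Fin 2) ℚ) * X 0 ^ (n - i) *
        (if i = n then A n else 0) = (if i = n then A n else 0) := by
      split_ifs with h
      · subst h; simp
      · simp
    rw [hc, hBi, hX]
    linear_combination (((n + 1 - i : ℕ) : MvPolynomial (Fin 2) ℚ) * X 0 ^ (n - i)) * hs - hd
      - X 0 ^ (n - i) * X 0 ^ i * (-1) ^ i * hch
  have halt : ∑ i ∈ Finset.range (n + 1),
      ((-1) ^ i * (Nat.choose n i : MvPolynomial (Fin 2) ℚ)) = 0 := by
    have h := Int.alternating_sum_range_choose_of_ne (n := n) (by omega)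
    exact_mod_cast congrArg (Int.cast (R := MvPolynomial (Fin 2) ℚ)) h
  rw [Finset.sum_congr rfl hterm, Finset.sum_sub_distrib, ← Finset.mul_sum, halt,
    Finset.sum_ite_eq' , if_pos (Finset.self_mem_range_succ n)]
  simp only [hA]
  ring
end

section
/- Fix an integer n ≥ 1 and work in ℚ[X, Y]. For 0 ≤ p ≤ n − 1 set B_p = (−1)^p · Σ_{j=0}^{p} C(n+1, j) X^j Y^{p−j}, and set B_p = 0 for p ≥ n as well as B_{−1} = 0. Then Σ_{i=0}^{n+1} ( X^{n+1−i} B_i + X^{n+1−i} Y B_{i−1} ) = (−1)^{n+1} · ( n X^{n+1} + Σ_{j=0}^{n−1} C(n+1, j) X^{j+1} Y^{n−j} ). -/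
open MvPolynomial Finset

/-- The differential `∂(s⁻¹c_{n+1})` in the minimal Sullivan model of `Gr₁^ℂ(TℂPⁿ)`:
with `B_p = (-1)^p ∑_{j=0}^{p} C(n+1,j) X^j Y^{p-j}` for `0 ≤ p ≤ n-1`, `B_p = 0` for
`p ≥ n` and `B_{-1} = 0`, one has
`∑_{i=0}^{n+1} (X^{n+1-i} B_i + X^{n+1-i} Y B_{i-1})
  = (-1)^{n+1} (n X^{n+1} + ∑_{j=0}^{n-1} C(n+1,j) X^{j+1} Y^{n-j})`
in `ℚ[X, Y] = MvPolynomial (Fin 2) ℚ` with `X = X 0`, `Y = X 1`. -/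
theorem stmt4 (n : ℕ) (hn : 1 ≤ n)
    (B : ℕ → MvPolynomial (Fin 2) ℚ)
    (hB : ∀ m, B m = if m < n then (-1) ^ m *
      ∑ j ∈ Finset.range (m + 1),
        (Nat.choose (n + 1) j : MvPolynomial (Fin 2) ℚ) * X 0 ^ j * X 1 ^ (m - j)
      else 0) :
    ∑ i ∈ Finset.range (n + 2),
      (X 0 ^ (n + 1 - i) * B i +
        X 0 ^ (n + 1 - i) * X 1 * (if i = 0 then 0 else B (i - 1))) =
    (-1) ^ (n + 1) *
      ((n : MvPolynomial (Fin 2) ℚ) * X 0 ^ (n + 1) +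
        ∑ j ∈ Finset.range n,
          (Nat.choose (n + 1) j : MvPolynomial (Fin 2) ℚ) *
            X 0 ^ (j + 1) * X 1 ^ (n - j)) := by
  obtain ⟨k, rfl⟩ : ∃ k, n = k + 1 := ⟨n - 1, by omega⟩
  have hlast : B (k + 1) = 0 := by rw [hB]; simp
  have hlast2 : B (k + 2) = 0 := by rw [hB]; simp
  have key : ∀ i ∈ Finset.range (k + 1),
      (X 0 ^ (k + 1 + 1 - i) * B i +
        X 0 ^ (k + 1 + 1 - i) * X 1 * (if i = 0 then 0 else B (i - 1)))
      = X 0 ^ (k + 2) * ((-1) ^ i * (Nat.choose (k + 1 + 1) i : MvPolynomial (Fin 2) ℚ)) := by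
    intro i hi
    have hi' := Finset.mem_range.mp hi
    rcases i with _ | i
    · rw [hB]; simp
    · have h1 : ∑ j ∈ Finset.range (i + 1),
          (Nat.choose (k + 1 + 1) j : MvPolynomial (Fin 2) ℚ) * X 0 ^ j * X 1 ^ (i + 1 - j)
          = X 1 * ∑ j ∈ Finset.range (i + 1),
          (Nat.choose (k + 1 + 1) j : MvPolynomial (Fin 2) ℚ) * X 0 ^ j * X 1 ^ (i - j) := by
        rw [Finset.mul_sum]
        refine Finset.sum_congr rfl fun j hj => ?_
        have := Finset.mem_range.mp hj
        rw [show i + 1 - j = (i - j) + 1 by omega]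
        ring
      have hp : (X 0 : MvPolynomial (Fin 2) ℚ) ^ (k + 2)
          = X 0 ^ (k + 1 + 1 - (i + 1)) * X 0 ^ (i + 1) := by
        rw [← pow_add]; congr 1; omega
      rw [if_neg (Nat.succ_ne_zero i), Nat.add_sub_cancel, hB (i + 1), hB i, if_pos hi',
        if_pos (by omega), Finset.sum_range_succ, h1, Nat.sub_self, hp]
      ring
  have alt := Int.alternating_sum_range_choose (n := k + 2)
  rw [if_neg (by omega), Finset.sum_range_succ, Finset.sum_range_succ] at alt
  have alt2 := congrArg (Int.cast : ℤ → MvPolynomial (Fin 2) ℚ) alt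
  rw [Nat.choose_self, Nat.choose_succ_self_right] at alt2
  push_cast at alt2
  have h2 : ∑ j ∈ Finset.range (k + 1),
      (Nat.choose (k + 1 + 1) j : MvPolynomial (Fin 2) ℚ) * X 0 ^ (j + 1) * X 1 ^ (k + 1 - j)
      = X 0 * X 1 * ∑ j ∈ Finset.range (k + 1),
      (Nat.choose (k + 1 + 1) j : MvPolynomial (Fin 2) ℚ) * X 0 ^ j * X 1 ^ (k - j) := by
    rw [Finset.mul_sum]
    refine Finset.sum_congr rfl fun j hj => ?_
    have := Finset.mem_range.mp hj
    rw [show k + 1 - j = (k - j) + 1 by omega]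
    ring
  rw [Finset.sum_range_succ, Finset.sum_range_succ, Finset.sum_congr rfl key, ← Finset.mul_sum,
    if_neg (Nat.succ_ne_zero k), if_neg (Nat.succ_ne_zero (k + 1)), Nat.add_sub_cancel,
    show k + 2 - 1 = k + 1 by omega, hlast, hlast2, hB k, if_pos (Nat.lt_succ_self k), h2,
    show k + 1 + 1 - (k + 1) = 1 by omega]
  push_cast
  linear_combination (X 0 : MvPolynomial (Fin 2) ℚ) ^ (k + 2) * alt2
end

section
/- Fix an integer n ≥ 1 and work in ℚ[X, Y, C₁, …, C_{n+1}], with the convention C₀ = 1. For p ≥ 0 set B′_p = (−1)^p · Σ_{q=0}^{p} (−1)^q C_q · Σ_{i=0}^{p−q} C(n−q+1, i) X^i Y^{p−q−i}, and set B′_{−1} = 0. Then for every integer p with 1 ≤ p ≤ n − 1 one has Σ_{i=0}^{p} C(n+1−i, p−i) · ( X^{p−i} B′_i + X^{p−i} Y B′_{i−1} ) = C_p. -/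
open MvPolynomial Finset

lemma aux_S {R : Type*} [CommRing R] (a : ℕ → R) (Y : R) (m : ℕ) :
    ∑ i ∈ Finset.range (m + 1 + 1), a i * Y ^ (m + 1 - i)
      = a (m + 1) + Y * ∑ i ∈ Finset.range (m + 1), a i * Y ^ (m - i) := by
  rw [Finset.sum_range_succ, Finset.mul_sum, add_comm]
  congr 1
  · simp
  · refine Finset.sum_congr rfl fun i hi => ?_
    have : i ≤ m := by simpa [Nat.lt_succ_iff] using hi
    rw [Nat.succ_sub this, pow_succ]; ring

lemma aux_alt {R : Type*} [CommRing R] (N k : ℕ) (hk : k ≤ N) :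
    ∑ j ∈ Finset.range (k + 1), (-1 : R) ^ j * (N.choose j : R) * ((N - j).choose (k - j) : R)
      = if k = 0 then 1 else 0 := by
  have h := congrArg (Int.cast : ℤ → R) (Int.alternating_sum_range_choose (n := k))
  push_cast at h
  have h2 : ∑ j ∈ Finset.range (k + 1),
      (-1 : R) ^ j * (N.choose j : R) * ((N - j).choose (k - j) : R)
      = (N.choose k : R) * ∑ j ∈ Finset.range (k + 1), (-1 : R) ^ j * (k.choose j : R) := by
    rw [Finset.mul_sum]
    refine Finset.sum_congr rfl fun j hj => ?_
    have hj' : j ≤ k := by simpa [Nat.lt_succ_iff] using hj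
    have e := congrArg (Nat.cast : ℕ → R) (Nat.choose_mul (n := N) (k := k) (s := j) hj')
    push_cast at e
    linear_combination (-(-1 : R) ^ j) * e
  rw [h2, h]
  split_ifs with h0
  · subst h0; simp
  · simp

lemma aux_main {R : Type*} [CommRing R] (n p : ℕ) (hp : p ≤ n) (x y : R) (c B : ℕ → R)
    (hB : ∀ m, B m = (-1) ^ m *
      ∑ q ∈ Finset.range (m + 1), (-1) ^ q * c q *
        ∑ i ∈ Finset.range (m - q + 1),
          (Nat.choose (n - q + 1) i : R) * x ^ i * y ^ (m - q - i)) :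
    ∑ i ∈ Finset.range (p + 1), (Nat.choose (n + 1 - i) (p - i) : R) *
        (x ^ (p - i) * B i + x ^ (p - i) * y * (if i = 0 then 0 else B (i - 1))) = c p := by
  have key : ∀ i, B i + y * (if i = 0 then 0 else B (i - 1)) =
      ∑ q ∈ Finset.range (i + 1), (-1) ^ i * (-1) ^ q * c q *
        ((Nat.choose (n - q + 1) (i - q) : R) * x ^ (i - q)) := by
    intro i
    rcases i with _ | m
    · simp [hB]
    · rw [if_neg (Nat.succ_ne_zero m), Nat.add_sub_cancel, hB (m + 1), hB m,
        Finset.sum_range_succ, Finset.sum_range_succ _ (m + 1)]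
      have : ∑ q ∈ Finset.range (m + 1), (-1) ^ q * c q *
          ∑ i ∈ Finset.range (m + 1 - q + 1),
          (Nat.choose (n - q + 1) i : R) * x ^ i * y ^ (m + 1 - q - i) =
          ∑ q ∈ Finset.range (m + 1), ((-1) ^ q * c q *
            ((Nat.choose (n - q + 1) (m + 1 - q) : R) * x ^ (m + 1 - q))) +
          y * ∑ q ∈ Finset.range (m + 1), (-1) ^ q * c q *
            ∑ i ∈ Finset.range (m - q + 1),
            (Nat.choose (n - q + 1) i : R) * x ^ i * y ^ (m - q - i) := by
        rw [Finset.mul_sum, ← Finset.sum_add_distrib]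
        refine Finset.sum_congr rfl fun q hq => ?_
        have hq' : q ≤ m := by simpa [Nat.lt_succ_iff] using hq
        rw [Nat.sub_add_comm hq', aux_S (fun i => (Nat.choose (n - q + 1) i : R) * x ^ i)]
        ring
      rw [this]
      simp only [mul_assoc ((-1 : R) ^ (m + 1)), ← Finset.mul_sum]
      simp
      ring
  have h1 : ∀ i ∈ Finset.range (p + 1), (Nat.choose (n + 1 - i) (p - i) : R) *
        (x ^ (p - i) * B i + x ^ (p - i) * y * (if i = 0 then 0 else B (i - 1))) =
      ∑ q ∈ Finset.range (i + 1), (Nat.choose (n + 1 - i) (p - i) : R) * x ^ (p - i) *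
       ((-1) ^ i * (-1) ^ q * c q * ((Nat.choose (n - q + 1) (i - q) : R) * x ^ (i - q))) := by
    intro i _
    rw [← Finset.mul_sum, ← key]; ring
  rw [Finset.sum_congr rfl h1,
    Finset.sum_comm' (t' := Finset.range (p + 1)) (s' := fun q => Finset.Ico q (p + 1))
      (by intro a b; simp only [Finset.mem_range, Finset.mem_Ico]; omega)]
  have h2 : ∀ q ∈ Finset.range (p + 1), ∑ i ∈ Finset.Ico q (p + 1),
      (Nat.choose (n + 1 - i) (p - i) : R) * x ^ (p - i) *
       ((-1) ^ i * (-1) ^ q * c q * ((Nat.choose (n - q + 1) (i - q) : R) * x ^ (i - q)))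
      = if q = p then c p else 0 := by
    intro q hq
    have hq' : q ≤ p := by simpa [Nat.lt_succ_iff] using hq
    rw [Finset.sum_Ico_eq_sum_range, Nat.sub_add_comm hq']
    have h3 := aux_alt (R := R) (n - q + 1) (p - q) (by omega)
    trans c q * x ^ (p - q) * (if p - q = 0 then 1 else 0)
    · rw [← h3, Finset.mul_sum]
      refine Finset.sum_congr rfl fun j hj => ?_
      have hj' : j ≤ p - q := by simpa [Nat.lt_succ_iff] using hj
      have e1 : n + 1 - (q + j) = n - q + 1 - j := by omega
      have e2 : p - (q + j) = p - q - j := by omega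
      have e3 : x ^ (p - q) = x ^ (p - q - j) * x ^ j := by
        rw [← pow_add]; congr 1; omega
      have e4 : (-1 : R) ^ (q + j) * (-1) ^ q = (-1) ^ j := by
        rw [pow_add, mul_right_comm, ← mul_pow]; simp
      rw [e1, e2, e3, Nat.add_sub_cancel_left, e4]; ring
    · by_cases h : q = p
      · subst h; simp
      · rw [if_neg h, if_neg (by omega), mul_zero]
  rw [Finset.sum_congr rfl h2]
  simp

/-- The relative closed forms
`B′_p = (-1)^p ∑_{q=0}^{p} (-1)^q C_q ∑_{i=0}^{p-q} C(n-q+1,i) X^i Y^{p-q-i}`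
solve the relative elimination equations
`∑_{i=0}^{p} C(n+1-i, p-i) (X^{p-i} B′_i + X^{p-i} Y B′_{i-1}) = C_p` for `1 ≤ p ≤ n-1`,
in `ℚ[X, Y, C₁, …, C_{n+1}] = MvPolynomial (Fin (n+3)) ℚ` with `X = X 0`, `Y = X 1`,
`C_q = X (q+1)` for `1 ≤ q ≤ n+1`, `C₀ = 1`, and `B′_{-1} = 0`. -/
theorem stmt5 (n : ℕ) (hn : 1 ≤ n)
    (Cc : ℕ → MvPolynomial (Fin (n + 3)) ℚ)
    (hC0 : Cc 0 = 1)
    (hC : ∀ q, 1 ≤ q → q ≤ n + 1 → ∀ h : q + 1 < n + 3, Cc q = X ⟨q + 1, h⟩)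
    (B : ℕ → MvPolynomial (Fin (n + 3)) ℚ)
    (hB : ∀ m, B m = (-1) ^ m *
      ∑ q ∈ Finset.range (m + 1), (-1) ^ q * Cc q *
        ∑ i ∈ Finset.range (m - q + 1),
          (Nat.choose (n - q + 1) i : MvPolynomial (Fin (n + 3)) ℚ) *
            X 0 ^ i * X 1 ^ (m - q - i))
    (p : ℕ) (hp1 : 1 ≤ p) (hp2 : p ≤ n - 1) :
    ∑ i ∈ Finset.range (p + 1),
      (Nat.choose (n + 1 - i) (p - i) : MvPolynomial (Fin (n + 3)) ℚ) *
        (X 0 ^ (p - i) * B i +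
          X 0 ^ (p - i) * X 1 * (if i = 0 then 0 else B (i - 1))) = Cc p := by
  exact aux_main n p (by omega) (X 0) (X 1) Cc B hB
end
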